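/- Let b > 0, c₁ > 0, c₂ ∈ ℝ, and set s = √(c₂² + 8b²c₁) and λ₊ = (−c₂ + s)/(4b²). Let I ⊆ ℝ be an open interval and λ : I → ℝ a smooth positive function satisfying both λ''(u)·λ(u) − λ'(u)² = c₁ + 2b²·λ(u)⁴ and λ'(u)² = −c₁ + c₂·λ(u)² + 2b²·λ(u)⁴ on I. Then the Gaussian curvature K(u) = (−λ(u)λ''(u) + λ'(u)²)/λ(u)⁴ of the special Liouville metric λ(u)²(du² + dv²) satisfies K(u) = −2b² − c₁/λ(u)⁴ and −2b² − c₁/λ₊² ≤ K(u) < −2b² for all u ∈ I. -/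

import Mathlib

/-!
The curvature equation turns the numerator of `K` into `-(c₁ + 2b²λ⁴)`, so `K = -2b² - c₁/λ⁴`,
which lies below `-2b²` because `c₁ > 0`. For the lower bound, the first integral reads
`0 ≤ λ'² = p(λ²)` with `p(t) = 2b²t² + c₂t - c₁`. Since `p` is convex and `p(0) < 0`, it is negative
from `0` up to its positive root `λ₊`; hence `λ₊ ≤ λ²`, that is, `c₁/λ⁴ ≤ c₁/λ₊²`.
-/

open Filter Topology

section Quadratic

variable {F : Type*} [Field F] [LinearOrder F] [IsStrictOrderedRing F] {a b c : F}

lemma quadratic_larger_root_pos {s : F} (ha : 0 < a) (hc : c < 0) (hs : 0 ≤ s)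
    (h : discrim a b c = s * s) : 0 < (-b + s) / (2 * a) := by
  have hbs : b < s := by
    refine lt_of_pow_lt_pow_left₀ 2 hs ?_
    unfold discrim at h
    linarith [mul_neg_of_pos_of_neg ha hc]
  exact div_pos (by linarith) (by positivity)

lemma pos_root_le_of_quadratic_nonneg {t x : F} (ha : 0 ≤ a) (hc : c < 0) (ht : 0 < t)
    (hroot : a * (t * t) + b * t + c = 0) (hx : 0 ≤ x) (h : 0 ≤ a * (x * x) + b * x + c) :
    t ≤ x := by
  have hslope : 0 < a * t + b := by
    have hmul : t * (a * t + b) = -c := by linear_combination hroot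
    exact (mul_pos_iff_of_pos_left ht).mp (hmul ▸ neg_pos.mpr hc)
  have hfactor : a * (x * x) + b * x + c = (x - t) * (a * x + (a * t + b)) := by
    linear_combination hroot
  rw [hfactor] at h
  exact sub_nonneg.mp (nonneg_of_mul_nonneg_left h (by positivity))

end Quadratic

lemma hasDerivAt_of_contDiffOn {𝕜 E : Type*} [NontriviallyNormedField 𝕜] [NormedAddCommGroup E]
    [NormedSpace 𝕜 E] {f : 𝕜 → E} {I : Set 𝕜} {x : 𝕜} {n : WithTop ℕ∞} (hf : ContDiffOn 𝕜 n f I)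
    (hn : n ≠ 0) (hI : IsOpen I) (hx : x ∈ I) : HasDerivAt f (deriv f x) x :=
  ((hf.differentiableOn hn).differentiableAt (hI.mem_nhds hx)).hasDerivAt

/-- The Gaussian curvature at `(u, v)` of the special Liouville metric `λ(u)²(du² + dv²)`, given by
its formula in terms of the conformal factor `λ`; it does not depend on `v`. -/
noncomputable def liouvilleCurvature (lam : ℝ → ℝ) (u : ℝ) : ℝ :=
  (-(lam u) * deriv (deriv lam) u + (deriv lam u) ^ 2) / (lam u) ^ 4

section LiouvilleCurvature

variable {lam lam' : ℝ → ℝ} {u lam'' : ℝ}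

lemma liouvilleCurvature_eq_of_hasDerivAt (hlam : ∀ᶠ x in 𝓝 u, HasDerivAt lam (lam' x) x)
    (hlam' : HasDerivAt lam' lam'' u) :
    liouvilleCurvature lam u = (-(lam u) * lam'' + (lam' u) ^ 2) / (lam u) ^ 4 := by
  have hderiv : deriv lam =ᶠ[𝓝 u] lam' := hlam.mono fun _ hx ↦ hx.deriv
  rw [liouvilleCurvature, hderiv.deriv_eq, hlam'.deriv, hderiv.eq_of_nhds]

lemma liouvilleCurvature_eq_neg_sub_div {k c : ℝ}
    (hlam : ∀ᶠ x in 𝓝 u, HasDerivAt lam (lam' x) x) (hlam' : HasDerivAt lam' lam'' u)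
    (hne : lam u ≠ 0) (hcurv : lam'' * lam u - (lam' u) ^ 2 = c + k * (lam u) ^ 4) :
    liouvilleCurvature lam u = -k - c / (lam u) ^ 4 := by
  rw [liouvilleCurvature_eq_of_hasDerivAt hlam hlam']
  field_simp
  linear_combination -hcurv

theorem stmt_4_general {b c₁ c₂ lamPlus : ℝ} (hc₁ : 0 < c₁) (hlamPlus : 0 < lamPlus)
    (hroot : 2 * b ^ 2 * (lamPlus * lamPlus) + c₂ * lamPlus + -c₁ = 0)
    (hlam : ∀ᶠ x in 𝓝 u, HasDerivAt lam (lam' x) x) (hlam' : HasDerivAt lam' lam'' u)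
    (hne : lam u ≠ 0)
    (hcurv : lam'' * lam u - (lam' u) ^ 2 = c₁ + 2 * b ^ 2 * (lam u) ^ 4)
    (hfirst : (lam' u) ^ 2 = -c₁ + c₂ * (lam u) ^ 2 + 2 * b ^ 2 * (lam u) ^ 4) :
    liouvilleCurvature lam u = -2 * b ^ 2 - c₁ / (lam u) ^ 4 ∧
      -2 * b ^ 2 - c₁ / lamPlus ^ 2 ≤ liouvilleCurvature lam u ∧
      liouvilleCurvature lam u < -2 * b ^ 2 := by
  have hK : liouvilleCurvature lam u = -2 * b ^ 2 - c₁ / (lam u) ^ 4 := by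
    rw [liouvilleCurvature_eq_neg_sub_div hlam hlam' hne hcurv, neg_mul]
  have hle : lamPlus ≤ (lam u) ^ 2 :=
    pos_root_le_of_quadratic_nonneg (by positivity) (neg_lt_zero.mpr hc₁) hlamPlus hroot
      (sq_nonneg _) (by linarith [sq_nonneg (lam' u)])
  have hsq_le : lamPlus ^ 2 ≤ (lam u) ^ 4 :=
    calc lamPlus ^ 2 ≤ ((lam u) ^ 2) ^ 2 := by gcongr
      _ = (lam u) ^ 4 := by ring
  refine ⟨hK, ?_, ?_⟩ <;> rw [hK]
  · gcongr
  · exact sub_lt_self _ (by positivity)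

end LiouvilleCurvature

/-- For a conformal factor satisfying the curvature equation and its first
integral, the Gaussian curvature is `K = -2b² - c₁/λ⁴` and `-2b² - c₁/λ₊² ≤ K < -2b²`. -/
theorem stmt_4 (b c₁ c₂ s lamPlus : ℝ) (hb : 0 < b) (hc₁ : 0 < c₁)
    (hs : s = Real.sqrt (c₂ ^ 2 + 8 * b ^ 2 * c₁))
    (hlamPlus : lamPlus = (-c₂ + s) / (4 * b ^ 2))
    (I : Set ℝ) (hI : IsOpen I) (hI' : I.OrdConnected) (lam : ℝ → ℝ)
    (hlam : ContDiffOn ℝ (⊤ : ℕ∞) lam (I))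
    (hpos : ∀ u ∈ I, 0 < lam u)
    (hODE1 : ∀ u ∈ I,
      deriv (deriv lam) u * lam u - (deriv lam u) ^ 2 = c₁ + 2 * b ^ 2 * (lam u) ^ 4)
    (hODE2 : ∀ u ∈ I,
      (deriv lam u) ^ 2 = -c₁ + c₂ * (lam u) ^ 2 + 2 * b ^ 2 * (lam u) ^ 4)
    (K : ℝ → ℝ)
    (hK : ∀ u, K u =
      (-(lam u) * deriv (deriv lam) u + (deriv lam u) ^ 2) / (lam u) ^ 4) :
    ∀ u ∈ I,
      K u = -2 * b ^ 2 - c₁ / (lam u) ^ 4 ∧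
      -2 * b ^ 2 - c₁ / lamPlus ^ 2 ≤ K u ∧ K u < -2 * b ^ 2 := by
  obtain rfl : K = liouvilleCurvature lam := funext hK
  have ha : 0 < 2 * b ^ 2 := by positivity
  have hdiscrim : discrim (2 * b ^ 2) c₂ (-c₁) = s * s := by
    rw [hs, Real.mul_self_sqrt (by positivity), discrim]
    ring
  have hlamPlus_eq : lamPlus = (-c₂ + s) / (2 * (2 * b ^ 2)) := by
    rw [hlamPlus]
    ring
  have hlamPlus_pos : 0 < lamPlus :=
    hlamPlus_eq ▸ quadratic_larger_root_pos ha (neg_lt_zero.mpr hc₁) (hs ▸ Real.sqrt_nonneg _)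
      hdiscrim
  have hroot := (quadratic_eq_zero_iff ha.ne' hdiscrim lamPlus).mpr (.inl hlamPlus_eq)
  have hlam' : ContDiffOn ℝ 1 (deriv lam) I := hlam.deriv_of_isOpen hI (by norm_cast)
  intro u hu
  exact stmt_4_general hc₁ hlamPlus_pos hroot
    ((hI.eventually_mem hu).mono fun x hx ↦ hasDerivAt_of_contDiffOn hlam (by simp) hI hx)
    (hasDerivAt_of_contDiffOn hlam' one_ne_zero hI hu) (hpos u hu).ne' (hODE1 u hu) (hODE2 u hu)
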